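/- For every natural number n ≥ 1 and all x, y ∈ I_n = {1, 2, …, n}, d(x,y) ≤ ξ₂(n) + ξ₃(n), where ξ₂(n) and ξ₃(n) are the integer parts of the base-2 and base-3 logarithms of n respectively. -/

import Mathlib

/-- Ω(n): the number of prime factors of n counted with multiplicity. -/
def Omega (n : ℕ) : ℕ := n.primeFactorsList.length

/-- The arithmetic distance d(a,b) = Ω(lcm(a,b)) − Ω(gcd(a,b)). -/
def arithDist (a b : ℕ) : ℕ := Omega (Nat.lcm a b) - Omega (Nat.gcd a b)

theorem pow_length_le_prod_aux (k : ℕ) (l : List ℕ) (h : ∀ p ∈ l, k ≤ p) :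
    k ^ l.length ≤ l.prod := by
  induction l with
  | nil => simp
  | cons a t ih =>
    have h1 := ih (fun p hp => h p (List.mem_cons_of_mem _ hp))
    have h2 := h a List.mem_cons_self
    rw [List.length_cons, List.prod_cons, pow_succ, mul_comm]
    exact Nat.mul_le_mul h2 h1

theorem Omega_le_log_aux (k m n : ℕ) (hk : 1 < k) (hm : m ≠ 0) (hmn : m ≤ n)
    (h : ∀ p, p.Prime → p ∣ m → k ≤ p) : Omega m ≤ Nat.log k n := by
  apply Nat.le_log_of_pow_le hk
  refine le_trans ?_ hmn
  have := pow_length_le_prod_aux k m.primeFactorsList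
    (fun p hp => h p (Nat.prime_of_mem_primeFactorsList hp) (Nat.dvd_of_mem_primeFactorsList hp))
  rwa [Nat.prod_primeFactorsList hm] at this

theorem Omega_mul_aux (a b : ℕ) (ha : a ≠ 0) (hb : b ≠ 0) :
    Omega (a * b) = Omega a + Omega b := by
  unfold Omega
  rw [(Nat.perm_primeFactorsList_mul ha hb).length_eq, List.length_append]

theorem Omega_log_two_aux (m n : ℕ) (hm : m ≠ 0) (hmn : m ≤ n) : Omega m ≤ Nat.log 2 n :=
  Omega_le_log_aux 2 m n (by norm_num) hm hmn (fun _ hp _ => hp.two_le)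

theorem Omega_log_three_aux (m n : ℕ) (hm : m ≠ 0) (hmn : m ≤ n) (h2 : ¬ 2 ∣ m) :
    Omega m ≤ Nat.log 3 n := by
  refine Omega_le_log_aux 3 m n (by norm_num) hm hmn (fun p hp hd => ?_)
  have h := hp.two_le
  have : p ≠ 2 := by
    rintro rfl
    exact h2 hd
  omega

theorem arithDist_le_log_add_log (n : ℕ) (hn : 1 ≤ n) (x y : ℕ)
    (hx : x ∈ Set.Icc 1 n) (hy : y ∈ Set.Icc 1 n) :
    arithDist x y ≤ Nat.log 2 n + Nat.log 3 n := by
  obtain ⟨hx1, hxn⟩ := hx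
  obtain ⟨hy1, hyn⟩ := hy
  have hg : 0 < Nat.gcd x y := Nat.gcd_pos_of_pos_left _ hx1
  obtain ⟨a, b, hab, hxa, hyb⟩ := Nat.exists_coprime x y
  generalize hgd : Nat.gcd x y = g at *
  have ha : a ≠ 0 := by
    rintro rfl
    simp at hxa
    omega
  have hb : b ≠ 0 := by
    rintro rfl
    simp at hyb
    omega
  have han : a ≤ n := le_trans (by rw [hxa]; exact Nat.le_mul_of_pos_right _ hg) hxn
  have hbn : b ≤ n := le_trans (by rw [hyb]; exact Nat.le_mul_of_pos_right _ hg) hyn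
  have hl : Nat.lcm x y = g * (a * b) := by
    have h := Nat.gcd_mul_lcm x y
    rw [hgd] at h
    apply Nat.eq_of_mul_eq_mul_left hg
    rw [h]
    conv_lhs => rw [hxa, hyb]
    ring
  have hd : arithDist x y = Omega a + Omega b := by
    unfold arithDist
    rw [hl, hgd, Omega_mul_aux g _ hg.ne' (mul_ne_zero ha hb), Omega_mul_aux a b ha hb]
    omega
  rw [hd]
  by_cases h2 : 2 ∣ a
  · have h2b : ¬ 2 ∣ b := fun h => by
      have := Nat.dvd_gcd h2 h
      rw [hab] at this
      omega
    exact add_le_add (Omega_log_two_aux a n ha han) (Omega_log_three_aux b n hb hbn h2b)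
  · rw [add_comm]
    exact add_le_add (Omega_log_two_aux b n hb hbn) (Omega_log_three_aux a n ha han h2)
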